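/- arXiv:1805.04261 — 2 statements merged into one kernel-verified Lean document; each statement's English description precedes it below -/
import Mathlib

section
/- Let d be an even positive integer, let σ be a sign pattern of length d+1, and let U be a SAP for σ such that the couple (σ, U) is realizable by some polynomial. Let σ* (resp. σ†) denote the sign pattern of length d+2 obtained from σ by appending a sign +1 (resp. −1) on the right. Then the couple (σ*, ((0,1), U)) is realizable and the couple (σ†, ((1,0), U)) is realizable, where ((a,b), U) denotes the sequence of d+1 pairs beginning with (a,b) and followed by the pairs of U. -/
open Polynomial

/-- Number of sign changes among consecutive entries `s 0, …, s n`. -/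
def signChanges (s : ℕ → ℤ) (n : ℕ) : ℕ :=
  ((Finset.range n).filter (fun i => s i * s (i + 1) < 0)).card

/-- Number of sign preservations among consecutive entries `s 0, …, s n`. -/
def signPres (s : ℕ → ℤ) (n : ℕ) : ℕ :=
  ((Finset.range n).filter (fun i => 0 < s i * s (i + 1))).card

/-- `s` encodes a sign pattern of length `d+1` (entries `s 0, …, s d`, each `±1`,
first entry `+1`). -/
def IsSignPattern (d : ℕ) (s : ℕ → ℤ) : Prop :=
  s 0 = 1 ∧ ∀ i ≤ d, s i = 1 ∨ s i = -1

/-- `pn k = (pos_k, neg_k)`, `k = 0, …, d-1`, is a sequence of admissible pairs (SAP)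
for the sign pattern `s` of length `d+1`: each pair is admissible for the truncated
pattern `σ_k` (of length `d+1-k`, with sign changes `signChanges s (d-k)` and sign
preservations `signPres s (d-k)`), the last entry of `σ_k` is `(-1)^{pos_k}`, and the
Rolle-type inequalities and parity condition hold between consecutive pairs. -/
def IsSAP (d : ℕ) (s : ℕ → ℤ) (pn : ℕ → ℕ × ℕ) : Prop :=
  (∀ k < d,
    (pn k).1 ≤ signChanges s (d - k) ∧
    Even ((signChanges s (d - k) : ℤ) - (pn k).1) ∧
    (pn k).2 ≤ signPres s (d - k) ∧
    Even ((signPres s (d - k) : ℤ) - (pn k).2) ∧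
    s (d - k) = (-1) ^ (pn k).1) ∧
  (∀ k, k + 1 < d →
    (pn k).1 ≤ (pn (k + 1)).1 + 1 ∧
    (pn k).2 ≤ (pn (k + 1)).2 + 1 ∧
    (pn k).1 + (pn k).2 ≤ (pn (k + 1)).1 + (pn (k + 1)).2 + 1 ∧
    Even (((pn (k + 1)).1 : ℤ) + (pn (k + 1)).2 + 3 - (pn k).1 - (pn k).2))

/-- The `k`-th derivative of a real polynomial. -/
noncomputable def iterDeriv : ℕ → Polynomial ℝ → Polynomial ℝ
  | 0, P => P
  | k + 1, P => Polynomial.derivative (iterDeriv k P)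

/-- `P` has exactly `pos` positive real roots and exactly `neg` negative real roots,
all of them simple. -/
def CountRoots (P : Polynomial ℝ) (pos neg : ℕ) : Prop :=
  {x : ℝ | 0 < x ∧ P.eval x = 0}.ncard = pos ∧
  {x : ℝ | x < 0 ∧ P.eval x = 0}.ncard = neg ∧
  ∀ x : ℝ, P.eval x = 0 → (Polynomial.derivative P).eval x ≠ 0

/-- The couple (sign pattern `s`, SAP `pn`) of degree `d` is realizable: there is a
monic real polynomial of degree `d`, with all coefficients nonzero, whose coefficient
signs define the pattern `s` (the sign of the coefficient of `x^(d-i)` is `s i`), and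
such that for `k = 0, …, d-1` the `k`-th derivative has exactly `(pn k).1` positive and
`(pn k).2` negative real roots, all simple. -/
def Realizable (d : ℕ) (s : ℕ → ℤ) (pn : ℕ → ℕ × ℕ) : Prop :=
  ∃ P : Polynomial ℝ, P.Monic ∧ P.natDegree = d ∧
    (∀ j ≤ d, P.coeff j ≠ 0) ∧
    (∀ i ≤ d, 0 < (s i : ℝ) * P.coeff (d - i)) ∧
    ∀ k < d, CountRoots (iterDeriv k P) (pn k).1 (pn k).2

lemma aux_iter (k : ℕ) (P : Polynomial ℝ) :
    iterDeriv (k + 1) P = iterDeriv k (derivative P) := by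
  induction k with
  | zero => rfl
  | succ k ih =>
    show derivative (iterDeriv (k + 1) P) = derivative (iterDeriv k (derivative P))
    rw [ih]

lemma aux_iter_C (c : ℝ) (k : ℕ) (P : Polynomial ℝ) :
    iterDeriv k (C c * P) = C c * iterDeriv k P := by
  induction k with
  | zero => rfl
  | succ k ih =>
    show derivative (iterDeriv k (C c * P)) = C c * derivative (iterDeriv k P)
    rw [ih, derivative_C_mul]

lemma aux_count (c : ℝ) (hc : c ≠ 0) (P : Polynomial ℝ) (a b : ℕ) (h : CountRoots P a b) :
    CountRoots (C c * P) a b := by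
  unfold CountRoots at *
  simpa [hc] using h

lemma aux_analysis (f p : ℝ → ℝ) (hf : ∀ x, HasDerivAt f (p x) x)
    (hp1 : ∀ᶠ x in Filter.atTop, 0 < p x) (hp2 : ∀ᶠ x in Filter.atBot, 0 < p x)
    (ht : Filter.Tendsto f Filter.atTop Filter.atTop)
    (hb : Filter.Tendsto f Filter.atBot Filter.atBot) :
    ∃ K : ℝ, 0 < K ∧ (∃ a, a < 0 ∧ p a ≠ 0 ∧ ∀ x, f x = -K ↔ x = a) ∧
      (∃ a, 0 < a ∧ p a ≠ 0 ∧ ∀ x, f x = K ↔ x = a) := by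
  have hc : Continuous f := continuous_iff_continuousAt.2 fun x => (hf x).continuousAt
  have hsurj := hc.surjective ht hb
  obtain ⟨M1, h1⟩ := Filter.eventually_atTop.1 hp1
  obtain ⟨M2, h2⟩ := Filter.eventually_atBot.1 hp2
  obtain ⟨M, hM0, hM1, hM2⟩ : ∃ M : ℝ, 0 < M ∧ M1 ≤ M ∧ -M ≤ M2 :=
    ⟨max 1 (max M1 (-M2)), by positivity, by simp, by
      have : -M2 ≤ max 1 (max M1 (-M2)) := by simp
      linarith⟩
  have mono1 : StrictMonoOn f (Set.Ici M) := by
    apply strictMonoOn_of_deriv_pos (convex_Ici M) hc.continuousOn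
    intro x hx
    rw [interior_Ici] at hx
    rw [(hf x).deriv]
    exact h1 x (hM1.trans (le_of_lt hx))
  have mono2 : StrictMonoOn f (Set.Iic (-M)) := by
    apply strictMonoOn_of_deriv_pos (convex_Iic (-M)) hc.continuousOn
    intro x hx
    rw [interior_Iic] at hx
    rw [(hf x).deriv]
    exact h2 x ((le_of_lt hx).trans hM2)
  obtain ⟨B, hB⟩ := (isCompact_Icc (a := -M) (b := M)).exists_bound_of_continuousOn
    hc.continuousOn
  have hB' : ∀ x, -M ≤ x → x ≤ M → -B ≤ f x ∧ f x ≤ B := fun x h h' =>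
    abs_le.1 (hB x ⟨h, h'⟩)
  have hB0 : 0 ≤ B := (norm_nonneg _).trans (hB 0 ⟨by linarith, hM0.le⟩)
  have up : ∀ x, -M ≤ x → -B ≤ f x := by
    intro x hx
    rcases le_total x M with h | h
    · exact (hB' x hx h).1
    · exact (hB' M (by linarith) le_rfl).1.trans
        (mono1.monotoneOn (Set.mem_Ici.2 le_rfl) (Set.mem_Ici.2 h) h)
  have dn : ∀ x, x ≤ M → f x ≤ B := by
    intro x hx
    rcases le_total (-M) x with h | h
    · exact (hB' x h hx).2
    · exact (mono2.monotoneOn (Set.mem_Iic.2 h) (Set.mem_Iic.2 le_rfl) h).trans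
        (hB' (-M) le_rfl (by linarith)).2
  have L : ∀ x, f x = -(B + 1) → x < -M := by
    intro x hx
    by_contra! h
    linarith [up x h]
  have R : ∀ x, f x = B + 1 → M < x := by
    intro x hx
    by_contra! h
    linarith [dn x h]
  refine ⟨B + 1, by linarith, ?_, ?_⟩
  · obtain ⟨a, ha⟩ := hsurj (-(B + 1))
    have hl := L a ha
    refine ⟨a, by linarith, (h2 a (by linarith)).ne', fun x => ⟨fun hx => ?_, fun hx => hx ▸ ha⟩⟩
    exact mono2.injOn (Set.mem_Iic.2 (L x hx).le) (Set.mem_Iic.2 hl.le) (hx.trans ha.symm)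
  · obtain ⟨a, ha⟩ := hsurj (B + 1)
    have hl := R a ha
    refine ⟨a, by linarith, (h1 a (by linarith)).ne', fun x => ⟨fun hx => ?_, fun hx => hx ▸ ha⟩⟩
    exact mono1.injOn (Set.mem_Ici.2 (R x hx).le) (Set.mem_Ici.2 hl.le) (hx.trans ha.symm)

lemma aux_top (P : Polynomial ℝ) (hm : P.Monic) (h : 0 < P.natDegree) :
    Filter.Tendsto (fun x => P.eval x) Filter.atTop Filter.atTop := by
  apply P.tendsto_atTop_of_leadingCoeff_nonneg
  · exact natDegree_pos_iff_degree_pos.1 h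
  · rw [hm.leadingCoeff]; norm_num

lemma aux_bot_even (P : Polynomial ℝ) (hm : P.Monic) (h : 0 < P.natDegree)
    (he : Even P.natDegree) :
    Filter.Tendsto (fun x => P.eval x) Filter.atBot Filter.atTop := by
  have h1 : Filter.Tendsto (fun x => (P.comp (-X)).eval x) Filter.atTop Filter.atTop := by
    apply aux_top
    · unfold Monic
      rw [leadingCoeff_comp (by simp), hm.leadingCoeff]; simp [he.neg_one_pow]
    · rw [natDegree_comp]; simpa using h
  have := h1.comp Filter.tendsto_neg_atBot_atTop
  simpa [Function.comp_def] using this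

lemma aux_bot_odd (P : Polynomial ℝ) (hm : P.Monic) (he : Odd P.natDegree) :
    Filter.Tendsto (fun x => P.eval x) Filter.atBot Filter.atBot := by
  have h1 : Filter.Tendsto (fun x => (-(P.comp (-X))).eval x) Filter.atTop Filter.atTop := by
    apply aux_top
    · unfold Monic
      rw [leadingCoeff_neg, leadingCoeff_comp (by simp), hm.leadingCoeff]
      simp [he.neg_one_pow]
    · rw [natDegree_neg, natDegree_comp]; simpa using he.pos
  have := Filter.tendsto_neg_atTop_atBot.comp (h1.comp Filter.tendsto_neg_atBot_atTop)
  simpa [Function.comp_def] using this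

lemma aux_real (d : ℕ) (s : ℕ → ℤ) (pn : ℕ → ℕ × ℕ) (P Q : Polynomial ℝ)
    (hPs : ∀ i ≤ d, 0 < (s i : ℝ) * P.coeff (d - i))
    (hPk : ∀ k < d, CountRoots (iterDeriv k P) (pn k).1 (pn k).2)
    (hQm : Q.Monic) (hQd : Q.natDegree = d + 1)
    (hco : ∀ i, Q.coeff (i + 1) = (d + 1 : ℝ) / (i + 1) * P.coeff i)
    (e : ℤ) (he : 0 < (e : ℝ) * Q.coeff 0) (hder : derivative Q = C (d + 1 : ℝ) * P)
    (ab : ℕ × ℕ) (hab : CountRoots Q ab.1 ab.2) :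
    Realizable (d + 1) (fun i => if i = d + 1 then e else s i)
      (fun k => if k = 0 then ab else pn (k - 1)) := by
  have key : ∀ i ≤ d + 1, 0 < (((if i = d + 1 then e else s i) : ℤ) : ℝ) *
      Q.coeff (d + 1 - i) := by
    intro i hi
    by_cases h : i = d + 1
    · subst h; simpa using he
    · have hi' : i ≤ d := by omega
      rw [if_neg h, show d + 1 - i = (d - i) + 1 by omega, hco]
      have h1 := hPs i hi'
      have h2 : (0 : ℝ) < (d + 1 : ℝ) / (((d - i : ℕ) : ℝ) + 1) := by positivity
      have := mul_pos h2 h1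
      linarith
  refine ⟨Q, hQm, hQd, ?_, key, ?_⟩
  · intro j hj h0
    have := key (d + 1 - j) (by omega)
    rw [show d + 1 - (d + 1 - j) = j by omega, h0] at this
    simp at this
  · intro k hk
    rcases k with _ | k
    · simpa [iterDeriv] using hab
    · rw [aux_iter, hder, aux_iter_C]
      have hne : (d + 1 : ℝ) ≠ 0 := by positivity
      have := aux_count _ hne _ _ _ (hPk k (by omega))
      beta_reduce
      rw [if_neg (Nat.succ_ne_zero k), Nat.add_sub_cancel]
      exact this

/-- Extension of a realizable couple (sign pattern, SAP) of even degree `d` by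
appending a `+` (resp. a `-`) sign and the pair `(0,1)` (resp. `(1,0)`). -/
theorem stmt1 (d : ℕ) (hd : 0 < d) (hdeven : Even d) (s : ℕ → ℤ)
    (hs : IsSignPattern d s) (pn : ℕ → ℕ × ℕ) (hpn : IsSAP d s pn)
    (hre : Realizable d s pn) :
    Realizable (d + 1) (fun i => if i = d + 1 then 1 else s i)
      (fun k => if k = 0 then (0, 1) else pn (k - 1)) ∧
    Realizable (d + 1) (fun i => if i = d + 1 then -1 else s i)
      (fun k => if k = 0 then (1, 0) else pn (k - 1)) := by
  obtain ⟨P, hPm, hPd, hP0, hPs, hPk⟩ := hre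
  obtain ⟨Q, hQ0, hco⟩ : ∃ Q : Polynomial ℝ, Q.coeff 0 = 0 ∧
      ∀ i, Q.coeff (i + 1) = (d + 1 : ℝ) / (i + 1) * P.coeff i := by
    refine ⟨X * ∑ i ∈ Finset.range (d + 1), monomial i ((d + 1 : ℝ) / (i + 1) * P.coeff i),
      by simp, fun i => ?_⟩
    rw [coeff_X_mul, finsetSum_coeff]
    simp only [coeff_monomial, Finset.sum_ite_eq', Finset.mem_range]
    split_ifs with h
    · rfl
    · rw [coeff_eq_zero_of_natDegree_lt (by omega : P.natDegree < i)]; simp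
  have hlead : Q.coeff (d + 1) = 1 := by
    have h1 : P.coeff d = 1 := by rw [← hPd]; exact hPm
    rw [hco, h1, mul_one, div_self (by positivity)]
  have hdle : Q.natDegree ≤ d + 1 := by
    rw [natDegree_le_iff_coeff_eq_zero]
    intro N hN
    obtain ⟨n, rfl⟩ : ∃ n, N = n + 1 := ⟨N - 1, by omega⟩
    rw [hco, coeff_eq_zero_of_natDegree_lt (by omega : P.natDegree < n), mul_zero]
  have hdeg : Q.natDegree = d + 1 :=
    natDegree_eq_of_le_of_coeff_ne_zero hdle (by rw [hlead]; norm_num)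
  have hQm : Q.Monic := by unfold Monic leadingCoeff; rw [hdeg, hlead]
  have hder : derivative Q = C (d + 1 : ℝ) * P := by
    ext n
    rw [coeff_derivative, hco, coeff_C_mul]
    have : (n : ℝ) + 1 ≠ 0 := by positivity
    field_simp
  have hc0 : (0 : ℝ) < d + 1 := by positivity
  obtain ⟨K, hK, ⟨a, ha, hpa, hua⟩, ⟨b, hb, hpb, hub⟩⟩ := aux_analysis (fun x => Q.eval x)
    (fun x => (derivative Q).eval x) (fun x => Q.hasDerivAt x)
    (by
      simp only [hder, eval_mul, eval_C]
      filter_upwards [(aux_top P hPm (by omega)).eventually_gt_atTop 0] with x hx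
      exact mul_pos hc0 hx)
    (by
      simp only [hder, eval_mul, eval_C]
      filter_upwards [(aux_bot_even P hPm (by omega) (by rwa [hPd])).eventually_gt_atTop 0]
        with x hx
      exact mul_pos hc0 hx)
    (aux_top Q hQm (by omega))
    (aux_bot_odd Q hQm (by rw [hdeg]; exact hdeven.add_one))
  have hmon : ∀ c : ℝ, (Q + C c).Monic := fun c => hQm.add_of_left (by
    refine lt_of_le_of_lt degree_C_le ?_
    exact natDegree_pos_iff_degree_pos.1 (by omega))
  refine ⟨aux_real d s pn P (Q + C K) hPs hPk (hmon K) (by simpa using hdeg)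
      (fun i => by simpa [coeff_C] using hco i) 1 (by simpa [hQ0] using hK) (by simpa using hder)
      (0, 1) ⟨?_, ?_, ?_⟩,
    aux_real d s pn P (Q + C (-K)) hPs hPk (hmon (-K)) (by rw [natDegree_add_C]; exact hdeg)
      (fun i => by rw [coeff_add, coeff_C_succ, add_zero]; exact hco i) (-1)
      (by rw [coeff_add, coeff_C_zero, hQ0]; push_cast; linarith)
      (by rw [derivative_add, derivative_C, add_zero]; exact hder)
      (1, 0) ⟨?_, ?_, ?_⟩⟩
  all_goals simp only [eval_add, eval_C, derivative_add, derivative_C, add_zero, add_eq_zero_iff_eq_neg, neg_neg, hua, hub]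
  · rw [show {x : ℝ | 0 < x ∧ x = a} = ∅ by ext x; simp; rintro h rfl; linarith]; simp
  · rw [show {x : ℝ | x < 0 ∧ x = a} = {a} by ext x; simp; rintro rfl; exact ha]; simp
  · rintro x rfl; exact hpa
  · rw [show {x : ℝ | 0 < x ∧ x = b} = {b} by ext x; simp; rintro rfl; exact hb]; simp
  · rw [show {x : ℝ | x < 0 ∧ x = b} = ∅ by ext x; simp; rintro h rfl; linarith]; simp
  · rintro x rfl; exact hpb
end

section
/- Let d ≥ 1 and let σ be a sign pattern of length d+1 whose Descartes pair is (d−1, 1) (resp. (1, d−1)), and let ((pos_0, neg_0), (pos_1, neg_1), ..., (pos_{d−1}, neg_{d−1})) be the unique SAP for σ with pos_0 + neg_0 = d, so that (pos_0, neg_0) = (d−1, 1) (resp. (1, d−1)). Then for every ν ∈ {1, ..., ⌊(d−1)/2⌋}, every SAP for σ of the form ((d−1−2ν, 1), (pos_1, neg_1), ..., (pos_{d−1}, neg_{d−1})) (resp. ((1, d−1−2ν), (pos_1, neg_1), ..., (pos_{d−1}, neg_{d−1}))) is realizable with the sign pattern σ. -/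
open Polynomial

open Filter Topology in
lemma pert (G : ℝ[X]) (hdeg : 0 < G.degree)
    (hs : ∀ x, G.eval x = 0 → G.derivative.eval x ≠ 0) :
    ∃ φ : ℝ → ℝ → ℝ, (∀ z, G.eval z = 0 → Tendsto (φ z) (𝓝 0) (𝓝 z)) ∧
      ∀ᶠ δ in 𝓝 (0:ℝ), (∀ x, G.eval x = δ ↔ ∃ z, G.eval z = 0 ∧ φ z δ = x) ∧
        Set.InjOn (fun z => φ z δ) {z | G.eval z = 0} ∧
        ∀ x, G.eval x = δ → G.derivative.eval x ≠ 0 := by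
  have hG0 : G ≠ 0 := by rintro rfl; simp at hdeg
  have hfin : {z | G.eval z = 0}.Finite := by
    have := G.rootSet_finite ℝ
    refine (G.roots.toFinset.finite_toSet).subset ?_
    intro z hz
    simp only [Finset.mem_coe, Multiset.mem_toFinset]
    exact (mem_roots hG0).2 hz
  have h1 : ∀ z, ∃ f : ℝ → ℝ, G.eval z = 0 → Tendsto f (𝓝 0) (𝓝 z) ∧
      (∀ᶠ δ in 𝓝 (0:ℝ), G.eval (f δ) = δ) ∧ ∀ᶠ x in 𝓝 z, f (G.eval x) = x := by
    intro z
    by_cases hz : G.eval z = 0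
    · have hd : HasStrictDerivAt (fun x => G.eval x) (G.derivative.eval z) z := G.hasStrictDerivAt z
      have hne := hs z hz
      refine ⟨hd.localInverse _ _ _ hne, fun _ => ⟨?_, ?_, ?_⟩⟩
      · have := (hd.hasStrictFDerivAt_equiv hne).localInverse_tendsto
        simpa [hz] using this
      · have := (hd.hasStrictFDerivAt_equiv hne).eventually_right_inverse
        simpa [hz] using this
      · exact (hd.hasStrictFDerivAt_equiv hne).eventually_left_inverse
    · exact ⟨id, fun h => absurd h hz⟩
  choose φ hφ using h1
  refine ⟨φ, fun z hz => (hφ z hz).1, ?_⟩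
  have e1 : ∀ᶠ δ in 𝓝 (0:ℝ), ∀ z ∈ {z | G.eval z = 0}, G.eval (φ z δ) = δ :=
    (eventually_all_finite hfin).2 fun z hz => (hφ z hz).2.1
  have e2 : ∀ᶠ δ in 𝓝 (0:ℝ), ∀ z ∈ {z | G.eval z = 0}, G.derivative.eval (φ z δ) ≠ 0 :=
    (eventually_all_finite hfin).2 fun z hz =>
      (hφ z hz).1.eventually
        ((G.derivative.continuous.continuousAt (x := z)).eventually_ne (hs z hz))
  have e3 : ∀ᶠ δ in 𝓝 (0:ℝ), ∀ z ∈ {z | G.eval z = 0}, ∀ w ∈ {z | G.eval z = 0},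
      z ≠ w → φ z δ ≠ φ w δ :=
    (eventually_all_finite hfin).2 fun z hz => (eventually_all_finite hfin).2 fun w hw => by
      by_cases h : z = w
      · simp [h]
      · have ht : Tendsto (fun δ => φ z δ - φ w δ) (𝓝 0) (𝓝 (z - w)) :=
          (hφ z hz).1.sub (hφ w hw).1
        filter_upwards [ht.eventually_ne (sub_ne_zero.2 h)] with δ hδ _ using sub_ne_zero.1 hδ
  have e4 : ∀ᶠ δ in 𝓝 (0:ℝ), ∀ x, G.eval x = δ → ∃ z, G.eval z = 0 ∧ φ z δ = x := by
    let U : Set ℝ := {x | ∃ z, G.eval z = 0 ∧ ∀ᶠ y in 𝓝 x, φ z (G.eval y) = y}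
    have hU : IsOpen U := by
      rw [isOpen_iff_mem_nhds]
      rintro x ⟨z, hz, hx⟩
      filter_upwards [hx.eventually_nhds] with y hy using ⟨z, hz, hy⟩
    have hinf : Tendsto (fun x => |G.eval x|) (cocompact ℝ) atTop := by
      have := G.tendsto_norm_atTop hdeg (tendsto_norm_cocompact_atTop (E := ℝ))
      simpa using this
    have hc : IsCompact ({x | |G.eval x| ≤ 1}) := by
      refine Metric.isCompact_of_isClosed_isBounded ?_ ?_
      · exact isClosed_le (by fun_prop) (by fun_prop)
      · have := hinf.eventually (eventually_gt_atTop 1)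
        rw [← Metric.cobounded_eq_cocompact] at this
        rw [← Bornology.isCobounded_compl_iff]
        filter_upwards [this] with x hx
        simpa using hx
    have hK : IsCompact ({x | |G.eval x| ≤ 1} \ U) := hc.diff hU
    have him : IsClosed ((fun x => G.eval x) '' ({x | |G.eval x| ≤ 1} \ U)) :=
      (hK.image G.continuous).isClosed
    have h0 : (0:ℝ) ∉ ((fun x => G.eval x) '' ({x | |G.eval x| ≤ 1} \ U)) := by
      rintro ⟨x, ⟨_, hx⟩, hx0⟩
      exact hx ⟨x, hx0, (hφ x hx0).2.2⟩
    filter_upwards [him.isOpen_compl.mem_nhds h0, Metric.ball_mem_nhds (0:ℝ) one_pos]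
      with δ h1 h2 x hx
    by_contra hcon
    apply h1
    refine ⟨x, ⟨?_, ?_⟩, hx⟩
    · show |G.eval x| ≤ 1; rw [hx]
      simpa using (Metric.mem_ball.1 h2).le
    · rintro ⟨z, hz, hxz⟩
      exact hcon ⟨z, hz, by rw [← hx]; exact hxz.self_of_nhds⟩
  filter_upwards [e1, e2, e3, e4] with δ h1 h2 h3 h4
  refine ⟨fun x => ⟨h4 x, ?_⟩, ?_, ?_⟩
  · rintro ⟨z, hz, rfl⟩; exact h1 z hz
  · intro z hz w hw h
    by_contra hne
    exact h3 z hz w hw hne h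
  · intro x hx
    obtain ⟨z, hz, rfl⟩ := h4 x hx
    exact h2 z hz

lemma inv_deriv (A B : ℝ[X]) (m : ℕ) (h : ∀ x : ℝ, x ≠ 0 → A.eval x = x ^ m * B.eval x⁻¹)
    (x : ℝ) (hx : x ≠ 0) (h0 : B.eval x⁻¹ = 0) (h1 : B.derivative.eval x⁻¹ ≠ 0) :
    A.derivative.eval x ≠ 0 := by
  have d1 : HasDerivAt (fun x => A.eval x) (A.derivative.eval x) x := A.hasDerivAt x
  have d2 : HasDerivAt (fun x : ℝ => x ^ m * B.eval x⁻¹)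
      ((m * x ^ (m - 1)) * B.eval x⁻¹ + x ^ m * (B.derivative.eval x⁻¹ * (-(x ^ 2)⁻¹))) x :=
    (hasDerivAt_pow m x).mul ((B.hasDerivAt x⁻¹).comp x (hasDerivAt_inv hx))
  have d3 : HasDerivAt (fun x => A.eval x) _ x := d2.congr_of_eventuallyEq (by
    filter_upwards [isOpen_ne.mem_nhds hx] with y hy using h y hy)
  rw [d1.unique d3, h0]
  simp [hx, h1]

lemma rev_eval (R : ℝ[X]) (y : ℝ) (hy : y ≠ 0) :
    R.reverse.eval y = y ^ R.natDegree * R.eval y⁻¹ := by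
  let _i : Invertible y⁻¹ := invertibleOfNonzero (inv_ne_zero hy)
  have := eval₂_reverse_mul_pow (RingHom.id ℝ) y⁻¹ R
  simp only [invOf_eq_inv, inv_inv] at this
  change R.reverse.eval y * _ = R.eval y⁻¹ at this
  rw [← this, mul_left_comm, ← mul_pow, mul_inv_cancel₀ hy, one_pow, mul_one]

open Filter Topology in
lemma ext_one (R : ℝ[X]) (hR0 : R.coeff 0 ≠ 0) (a b : ℕ) (hR : CountRoots R a b) (τ : ℝ)
    (hτ : τ ≠ 0) :
    ∀ᶠ ε in 𝓝[>] (0:ℝ), CountRoots (R + C (ε * τ) * X ^ (R.natDegree + 1))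
      (a + if τ * R.leadingCoeff < 0 then 1 else 0)
      (b + if 0 < τ * R.leadingCoeff then 1 else 0) := by
  set n := R.natDegree with hn
  have hRne : R ≠ 0 := by rintro rfl; simp at hR0
  have hl : R.leadingCoeff ≠ 0 := leadingCoeff_ne_zero.2 hRne
  set G : ℝ[X] := X * R.reverse with hGdef
  have hrev0 : R.reverse.eval 0 = R.leadingCoeff := by
    rw [← coeff_zero_eq_eval_zero, coeff_zero_reverse]
  have hG0 : G.eval 0 = 0 := by simp [hGdef]
  have hRrev : ∀ x : ℝ, x ≠ 0 → R.eval x = x ^ n * R.reverse.eval x⁻¹ := by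
    intro x hx
    rw [rev_eval R x⁻¹ (inv_ne_zero hx), inv_inv, ← hn, ← mul_assoc, ← mul_pow, mul_inv_cancel₀ hx, one_pow, one_mul]
  have hGz : ∀ z : ℝ, z ≠ 0 → (G.eval z = 0 ↔ R.eval z⁻¹ = 0) := by
    intro z hz
    simp [hGdef, rev_eval R z hz, hz]
  have hGd : ∀ z, G.derivative.eval z = R.reverse.eval z + z * R.reverse.derivative.eval z := by
    intro z; simp [hGdef, derivative_mul]
  have hdeg : 0 < G.degree := by
    have : R.reverse ≠ 0 := by simpa using hRne
    rw [hGdef, degree_mul, degree_X, degree_eq_natDegree this]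
    norm_cast; omega
  have hs : ∀ x, G.eval x = 0 → G.derivative.eval x ≠ 0 := by
    intro x hx
    rw [hGd]
    by_cases h : x = 0
    · subst h; simpa [hrev0] using hl
    · have h1 := (hGz x h).1 hx
      have h2 := inv_deriv R.reverse R n (fun y hy => rev_eval R y hy) x h h1 (hR.2.2 _ h1)
      have h3 : R.reverse.eval x = 0 := by rw [rev_eval R x h, h1]; simp
      rw [h3]; simpa using ⟨h, h2⟩
  obtain ⟨φ, hφ, hev⟩ := pert G hdeg hs
  have hfin : {z | G.eval z = 0}.Finite := by
    have hG0 : G ≠ 0 := by rintro h; simp [h] at hdeg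
    refine (G.roots.toFinset.finite_toSet).subset ?_
    intro z hz
    simp only [Finset.mem_coe, Multiset.mem_toFinset]
    exact (mem_roots hG0).2 hz
  have hevs : ∀ σ : ℝ, ∀ᶠ δ in 𝓝 (0:ℝ), ∀ z ∈ {z | G.eval z = 0}, 0 < σ * z → 0 < σ * φ z δ := by
    intro σ
    refine (eventually_all_finite hfin).2 fun z hz => ?_
    by_cases h : 0 < σ * z
    · filter_upwards [((hφ z hz).const_mul σ).eventually (lt_mem_nhds h)] with δ hδ _ using hδ
    · simp [h]
  have hev0 : ∀ᶠ δ in 𝓝 (0:ℝ), 0 < R.leadingCoeff * R.reverse.eval (φ 0 δ) := by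
    have : Tendsto (fun δ => R.leadingCoeff * R.reverse.eval (φ 0 δ)) (𝓝 0)
        (𝓝 (R.leadingCoeff * R.reverse.eval 0)) :=
      ((R.reverse.continuous.tendsto 0).comp (hφ 0 hG0)).const_mul _
    rw [hrev0] at this
    exact this.eventually (lt_mem_nhds (mul_self_pos.2 hl))
  have htend : Tendsto (fun ε : ℝ => -(ε * τ)) (𝓝[>] 0) (𝓝 0) := by
    have : Tendsto (fun ε : ℝ => -(ε * τ)) (𝓝 0) (𝓝 (-(0 * τ))) := by
      apply Continuous.tendsto; fun_prop
    simp only [zero_mul, neg_zero] at this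
    exact this.mono_left nhdsWithin_le_nhds
  filter_upwards [htend.eventually hev, htend.eventually (hevs 1), htend.eventually (hevs (-1)),
    htend.eventually hev0, self_mem_nhdsWithin] with ε h1 hp hm h0 hε
  have hε : 0 < ε := hε
  set δ := -(ε * τ) with hδ
  have hδ0 : δ ≠ 0 := by simp [hδ, hε.ne', hτ]
  obtain ⟨hsol, hinj, hder⟩ := h1
  set F := R + C (ε * τ) * X ^ (n + 1) with hF
  have hFH : ∀ x : ℝ, x ≠ 0 → F.eval x = x ^ (n+1) * (G - C δ).eval x⁻¹ := by
    intro x hx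
    simp only [hF, hGdef, hδ, eval_add, eval_mul, eval_C, eval_pow, eval_X, eval_sub, hRrev x hx]
    field_simp
    ring
  have hFz : ∀ x : ℝ, x ≠ 0 → (F.eval x = 0 ↔ G.eval x⁻¹ = δ) := by
    intro x hx
    rw [hFH x hx]
    simp [hx, sub_eq_zero]
  have hφ0 : 0 < δ * R.leadingCoeff * φ 0 δ := by
    have e : G.eval (φ 0 δ) = δ := (hsol _).2 ⟨0, hG0, rfl⟩
    have e2 : δ = φ 0 δ * R.reverse.eval (φ 0 δ) := by
      have e3 : G.eval (φ 0 δ) = φ 0 δ * R.reverse.eval (φ 0 δ) := by simp [hGdef]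
      rw [← e3, e]
    have hne : φ 0 δ ≠ 0 := by
      intro h; rw [h, zero_mul] at e2; exact hδ0 e2
    have : δ * R.leadingCoeff * φ 0 δ =
        (φ 0 δ) ^ 2 * (R.leadingCoeff * R.reverse.eval (φ 0 δ)) := by
      nth_rewrite 1 [e2]; ring
    rw [this]; positivity
  have key : ∀ σ : ℝ, σ * σ = 1 →
      (∀ z ∈ {z | G.eval z = 0}, 0 < σ * z → 0 < σ * φ z δ) →
      (∀ z ∈ {z | G.eval z = 0}, 0 < -σ * z → 0 < -σ * φ z δ) →
      {x : ℝ | 0 < σ * x ∧ F.eval x = 0}.ncard =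
        {x : ℝ | 0 < σ * x ∧ R.eval x = 0}.ncard +
          if 0 < σ * (δ * R.leadingCoeff) then 1 else 0 := by
    intro σ hσ hσp hσm
    have hσ0 : σ ≠ 0 := by rintro rfl; simp at hσ
    have hinvpos : ∀ x : ℝ, 0 < σ * x → 0 < σ * x⁻¹ := by
      intro x hx
      have hx0 : x ≠ 0 := by rintro rfl; simp at hx
      have : σ * x⁻¹ = (σ * x) * (x⁻¹) ^ 2 := by field_simp
      rw [this]; positivity
    have hφ0σ : 0 < σ * φ 0 δ ↔ 0 < σ * (δ * R.leadingCoeff) := by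
      have e : (σ * φ 0 δ) * (σ * (δ * R.leadingCoeff)) = δ * R.leadingCoeff * φ 0 δ := by
        linear_combination (δ * R.leadingCoeff * φ 0 δ) * hσ
      rw [← e] at hφ0
      exact ⟨fun h => (pos_iff_pos_of_mul_pos hφ0).1 h, fun h => (pos_iff_pos_of_mul_pos hφ0).2 h⟩
    let T : Set ℝ := {z | 0 < σ * z ∧ G.eval z = 0}
    have hTR : T = (fun x => x⁻¹) '' {x : ℝ | 0 < σ * x ∧ R.eval x = 0} := by
      ext z; constructor
      · rintro ⟨hz, hz2⟩
        have hz0 : z ≠ 0 := by rintro rfl; simp at hz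
        exact ⟨z⁻¹, ⟨hinvpos z hz, (hGz z hz0).1 hz2⟩, inv_inv z⟩
      · rintro ⟨x, ⟨hx, hx2⟩, rfl⟩
        have hx0 : x ≠ 0 := by rintro rfl; simp at hx
        refine ⟨hinvpos x hx, (hGz _ (inv_ne_zero hx0)).2 (by simpa using hx2)⟩
    have hTc : T.ncard = {x : ℝ | 0 < σ * x ∧ R.eval x = 0}.ncard := by
      rw [hTR, Set.ncard_image_of_injective _ inv_injective]
    have hTfin : T.Finite := hfin.subset fun z hz => hz.2
    have h0T : (0:ℝ) ∉ T := by rintro ⟨h, _⟩; simp at h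
    have hgen : ∀ T' : Set ℝ, T' ⊆ {z | G.eval z = 0} →
        (∀ z, G.eval z = 0 → (0 < σ * φ z δ ↔ z ∈ T')) →
        {x : ℝ | 0 < σ * x ∧ F.eval x = 0}.ncard = T'.ncard := by
      intro T' hT' hmem
      have : {x : ℝ | 0 < σ * x ∧ F.eval x = 0} = (fun x => x⁻¹) '' ((fun z => φ z δ) '' T') := by
        ext x; constructor
        · rintro ⟨hx, hx2⟩
          have hx0 : x ≠ 0 := by rintro rfl; simp at hx
          obtain ⟨z, hz, hz2⟩ := (hsol _).1 ((hFz x hx0).1 hx2)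
          refine ⟨x⁻¹, ⟨z, (hmem z hz).1 ?_, hz2⟩, inv_inv x⟩
          rw [hz2]; exact hinvpos x hx
        · rintro ⟨y, ⟨z, hz, rfl⟩, rfl⟩
          have hzp := (hmem z (hT' hz)).2 hz
          have hx0 : φ z δ ≠ 0 := by intro h; rw [h] at hzp; simp at hzp
          refine ⟨hinvpos _ hzp, (hFz _ (inv_ne_zero hx0)).2 ?_⟩
          simp only [inv_inv]
          exact (hsol _).2 ⟨z, hT' hz, rfl⟩
      rw [this, Set.ncard_image_of_injective _ inv_injective,
        (hinj.mono hT').ncard_image]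
    have hnz : ∀ z, G.eval z = 0 → z ≠ 0 → (0 < σ * φ z δ ↔ 0 < σ * z) := by
      intro z hz hz0
      refine ⟨fun h => ?_, hσp z hz⟩
      by_contra hcon
      have : σ * z ≠ 0 := mul_ne_zero hσ0 hz0
      have h3 : 0 < -σ * z := by
        have := lt_of_le_of_ne (not_lt.1 hcon) this
        linarith
      have := hσm z hz h3
      linarith
    split_ifs with hpos
    · rw [hgen (insert 0 T), Set.ncard_insert_of_notMem h0T hTfin, hTc]
      · intro z hz
        rcases hz with rfl | hz
        · exact hG0
        · exact hz.2
      · intro z hz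
        by_cases hz0 : z = 0
        · subst hz0
          simpa [hφ0σ] using hpos
        · rw [hnz z hz hz0]
          constructor
          · intro h; exact Or.inr ⟨h, hz⟩
          · rintro (h | h)
            · exact absurd h hz0
            · exact h.1
    · rw [hgen T, hTc, add_zero]
      · intro z hz; exact hz.2
      · intro z hz
        by_cases hz0 : z = 0
        · subst hz0
          rw [hφ0σ]
          exact ⟨fun h => absurd h hpos, fun h => absurd h h0T⟩
        · rw [hnz z hz hz0]
          exact ⟨fun h => ⟨h, hz⟩, fun h => h.1⟩
  refine ⟨?_, ?_, ?_⟩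
  · have := key 1 (by norm_num) hp hm
    simp only [one_mul] at this
    rw [this, hR.1]
    have e : 0 < δ * R.leadingCoeff ↔ τ * R.leadingCoeff < 0 := by
      have : δ * R.leadingCoeff = ε * (-(τ * R.leadingCoeff)) := by rw [hδ]; ring
      rw [this, mul_pos_iff_of_pos_left hε]; simp
    simp only [e]
  · have := key (-1) (by norm_num) hm (by simpa using hp)
    simp only [neg_mul, one_mul, Left.neg_pos_iff] at this
    rw [this, hR.2.1]
    have e : δ * R.leadingCoeff < 0 ↔ 0 < τ * R.leadingCoeff := by
      have : δ * R.leadingCoeff = -(ε * (τ * R.leadingCoeff)) := by rw [hδ]; ring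
      rw [this, Left.neg_neg_iff, mul_pos_iff_of_pos_left hε]
    simp only [e]
  · intro x hx
    have hx0 : x ≠ 0 := by
      rintro rfl
      apply hR0
      rw [coeff_zero_eq_eval_zero]
      simpa [hF] using hx
    have hg := (hFz x hx0).1 hx
    refine inv_deriv F (G - C δ) (n+1) hFH x hx0 (by simp [hg]) ?_
    simpa using hder _ hg

/-- sign changes among `t k, ..., t n`. -/
noncomputable def Cn (t : ℕ → ℝ) (k n : ℕ) : ℕ :=
  ((Finset.Ico k n).filter (fun j => t j * t (j + 1) < 0)).card

/-- sign preservations among `t k, ..., t n`. -/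
noncomputable def Pn (t : ℕ → ℝ) (k n : ℕ) : ℕ :=
  ((Finset.Ico k n).filter (fun j => 0 < t j * t (j + 1))).card

lemma Cn_succ (t : ℕ → ℝ) (k n : ℕ) (h : k ≤ n) :
    Cn t k (n + 1) = Cn t k n + if t n * t (n + 1) < 0 then 1 else 0 := by
  unfold Cn
  rw [← Finset.insert_Ico_right_eq_Ico_add_one h, Finset.filter_insert]
  split_ifs with h1
  · rw [Finset.card_insert_of_notMem (by simp)]
  · rfl

lemma Pn_succ (t : ℕ → ℝ) (k n : ℕ) (h : k ≤ n) :
    Pn t k (n + 1) = Pn t k n + if 0 < t n * t (n + 1) then 1 else 0 := by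
  unfold Pn
  rw [← Finset.insert_Ico_right_eq_Ico_add_one h, Finset.filter_insert]
  split_ifs with h1
  · rw [Finset.card_insert_of_notMem (by simp)]
  · rfl

/-- Main inductive predicate. -/
def HH (t : ℕ → ℝ) (n u v : ℕ) : Prop :=
  ∃ R : ℝ[X], R.natDegree = n ∧ (∀ j ≤ n, 0 < t j * R.coeff j) ∧
    ∀ k ≤ n, ∃ x y, CountRoots (derivative^[k] R) x y ∧
      x + (if k = 0 then u else 0) = Cn t k n ∧ y + (if k = 0 then v else 0) = Pn t k n

lemma count_const (c : ℝ) (hc : c ≠ 0) : CountRoots (C c) 0 0 := by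
  simp [CountRoots, hc]

lemma iter_top (R : ℝ[X]) (n : ℕ) (hn : R.natDegree = n) (hc : R.coeff n ≠ 0) :
    CountRoots (derivative^[n] R) 0 0 := by
  have h0 : (derivative^[n] R).natDegree = 0 := by
    have := natDegree_iterate_derivative R n
    omega
  rw [eq_C_of_natDegree_eq_zero h0]
  apply count_const
  rw [coeff_iterate_derivative]
  simp [hc, Nat.descFactorial_self, Nat.factorial_ne_zero]

lemma HH_zero (t : ℕ → ℝ) (ht : t 0 ≠ 0) : HH t 0 0 0 := by
  refine ⟨C (t 0), by simp, ?_, ?_⟩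
  · intro j hj
    obtain rfl : j = 0 := by omega
    simpa using ht
  · intro k hk
    obtain rfl : k = 0 := by omega
    exact ⟨0, 0, by simpa using count_const _ ht, by simp [Cn], by simp [Pn]⟩

open Filter Topology in
lemma HH_succ (t : ℕ → ℝ) (n u v : ℕ) (ht : t (n + 1) ≠ 0) (h : HH t n u v) :
    HH t (n + 1) u v := by
  obtain ⟨R, hdeg, hsign, hcount⟩ := h
  have hlead : R.leadingCoeff = R.coeff n := by rw [leadingCoeff, hdeg]
  have hcne : ∀ j ≤ n, R.coeff j ≠ 0 := fun j hj h0 => by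
    have := hsign j hj
    rw [h0] at this; simp at this
  have hev : ∀ k ∈ Finset.range (n + 1), ∀ᶠ ε in 𝓝[>] (0:ℝ), ∃ x y,
      CountRoots (derivative^[k] (R + C (ε * t (n+1)) * X ^ (n + 1))) x y ∧
      x + (if k = 0 then u else 0) = Cn t k (n + 1) ∧
      y + (if k = 0 then v else 0) = Pn t k (n + 1) := by
    intro k hk
    have hk : k ≤ n := by simpa [Nat.lt_succ_iff] using hk
    obtain ⟨x, y, hxy, hx, hy⟩ := hcount k hk
    set S := derivative^[k] R with hS
    have hSc : ∀ j, S.coeff j = ((j + k).descFactorial k : ℝ) * R.coeff (j + k) := by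
      intro j; rw [hS, coeff_iterate_derivative]; simp
    have hdpos : ∀ j, (0:ℝ) < ((j + k).descFactorial k : ℝ) := by
      intro j
      exact_mod_cast Nat.descFactorial_pos.2 (by omega)
    have hSn : S.natDegree = n - k := by
      apply natDegree_eq_of_le_of_coeff_ne_zero
      · have := natDegree_iterate_derivative R k
        rw [hdeg] at this; exact this
      · rw [hSc, Nat.sub_add_cancel hk]
        exact mul_ne_zero (by have := hdpos (n - k); rw [Nat.sub_add_cancel hk] at this; exact this.ne') (hcne n le_rfl)
    have hSl : S.leadingCoeff = (n.descFactorial k : ℝ) * R.coeff n := by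
      rw [leadingCoeff, hSn, hSc, Nat.sub_add_cancel hk]
    have hS0 : S.coeff 0 ≠ 0 := by
      rw [hSc]; exact mul_ne_zero (hdpos 0).ne' (by simpa using hcne k hk)
    have hd1 : (0:ℝ) < (n.descFactorial k : ℝ) := by
      exact_mod_cast Nat.descFactorial_pos.2 hk
    have hd2 : (0:ℝ) < ((n+1).descFactorial k : ℝ) := by
      exact_mod_cast Nat.descFactorial_pos.2 (by omega)
    have := ext_one S hS0 x y hxy (t (n+1) * (n+1).descFactorial k) (mul_ne_zero ht hd2.ne')
    have hsgn : ∃ q : ℝ, 0 < q ∧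
        t (n+1) * (n+1).descFactorial k * S.leadingCoeff = q * (t n * t (n + 1)) := by
      have h1 := hsign n le_rfl
      have htn : t n ≠ 0 := by intro h0; rw [h0] at h1; simp at h1
      refine ⟨(n+1).descFactorial k * n.descFactorial k * (t n * R.coeff n) * ((t n)⁻¹) ^ 2, ?_, ?_⟩
      · have : (t n)⁻¹ ≠ 0 := inv_ne_zero htn
        positivity
      · rw [hSl]; field_simp
    obtain ⟨q, hq, hqe⟩ := hsgn
    have e1 : q * (t n * t (n + 1)) < 0 ↔ t n * t (n + 1) < 0 := by
      constructor
      · intro h; by_contra hh; have := mul_nonneg hq.le (not_lt.1 hh); linarith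
      · intro h; exact mul_neg_of_pos_of_neg hq h
    filter_upwards [this] with ε hε
    refine ⟨x + if t (n + 1) * (n + 1).descFactorial k * S.leadingCoeff < 0 then 1 else 0,
      y + if 0 < t (n + 1) * (n + 1).descFactorial k * S.leadingCoeff then 1 else 0, ?_, ?_, ?_⟩
    · rw [iterate_map_add, iterate_derivative_C_mul,
        iterate_derivative_X_pow_eq_natCast_mul, ← hS]
      have e : C (ε * t (n + 1)) * (((n+1).descFactorial k : ℝ[X]) * X ^ (n + 1 - k)) =
          C (ε * (t (n+1) * (n+1).descFactorial k)) * X ^ (S.natDegree + 1) := by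
        rw [hSn, show n - k + 1 = n + 1 - k by omega]
        simp only [map_mul, map_natCast]
        ring
      rw [e]
      exact hε
    · rw [Cn_succ t k n hk, ← hx]
      simp only [hqe, e1]; ring
    · rw [Pn_succ t k n hk, ← hy]
      simp only [hqe, mul_pos_iff_of_pos_left hq]; ring
  obtain ⟨ε, hall, hε⟩ := (((Filter.eventually_all_finset _).2 hev).and self_mem_nhdsWithin).exists
  have hε : 0 < ε := hε
  set R' := R + C (ε * t (n+1)) * X ^ (n + 1) with hR'
  have hc1 : ∀ j ≤ n, R'.coeff j = R.coeff j := by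
    intro j hj
    simp only [hR', coeff_add, coeff_C_mul, coeff_X_pow]
    rw [if_neg (by omega)]; simp
  have hc2 : R'.coeff (n+1) = ε * t (n+1) := by
    have : R.coeff (n+1) = 0 := coeff_eq_zero_of_natDegree_lt (by omega)
    simp only [hR', coeff_add, this, coeff_C_mul, coeff_X_pow_self, zero_add, mul_one]
  have hc2' : R'.coeff (n+1) ≠ 0 := by rw [hc2]; exact mul_ne_zero hε.ne' ht
  have hdeg' : R'.natDegree = n + 1 := by
    apply natDegree_eq_of_le_of_coeff_ne_zero _ hc2'
    apply natDegree_add_le_of_degree_le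
    · omega
    · exact natDegree_C_mul_X_pow_le _ _
  refine ⟨R', hdeg', ?_, ?_⟩
  · intro j hj
    rcases Nat.lt_or_ge n j with h | h
    · obtain rfl : j = n + 1 := by omega
      rw [hc2]
      have : t (n+1) * (ε * t (n+1)) = ε * (t (n+1))^2 := by ring
      rw [this]; positivity
    · rw [hc1 j h]; exact hsign j h
  · intro k hk
    rcases Nat.lt_or_ge n k with h | h
    · obtain rfl : k = n + 1 := by omega
      exact ⟨0, 0, iter_top R' _ hdeg' hc2', by simp [Cn], by simp [Pn]⟩
    · exact hall k (by simp; omega)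

lemma HH_hyp (t : ℕ → ℝ) (n : ℕ) (ht : ∀ j ≤ n, t j ≠ 0) : HH t n 0 0 := by
  induction n with
  | zero => exact HH_zero t (ht 0 le_rfl)
  | succ n ih => exact HH_succ t n 0 0 (ht _ le_rfl) (ih fun j hj => ht j (by omega))

lemma HH_up (t : ℕ → ℝ) (e n u v : ℕ) (hen : e ≤ n) (ht : ∀ j ≤ n, t j ≠ 0)
    (h : HH t e u v) : HH t n u v := by
  induction n, hen using Nat.le_induction with
  | base => exact h
  | succ n hn ih => exact HH_succ t n u v (ht _ le_rfl) (ih fun j hj => ht j (by omega))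

lemma base_even (Q : ℝ[X]) (he : Even Q.natDegree) (hpos : 0 < Q.natDegree)
    (hl : 0 < Q.leadingCoeff) : ∃ A : ℝ, ∀ a, A ≤ a → CountRoots (Q + C a) 0 0 := by
  have hdeg : 0 < Q.degree := natDegree_pos_iff_degree_pos.1 hpos
  have h1 := Q.tendsto_atTop_of_leadingCoeff_nonneg hdeg hl.le
  have h2 := (Q.comp (-X)).tendsto_atTop_of_leadingCoeff_nonneg (by
      rw [← natDegree_pos_iff_degree_pos, natDegree_comp]; simpa using hpos) (by
      rw [leadingCoeff_comp (by simp)]; simp [he.neg_one_pow, hl.le])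
  obtain ⟨M1, hM1⟩ := Filter.eventually_atTop.1 (h1.eventually (Filter.eventually_ge_atTop 0))
  obtain ⟨M2, hM2⟩ := Filter.eventually_atTop.1 (h2.eventually (Filter.eventually_ge_atTop 0))
  obtain ⟨B, hB⟩ := (isCompact_Icc (a := -M2) (b := M1)).exists_bound_of_continuousOn
    (f := fun x => Q.eval x) Q.continuous.continuousOn
  refine ⟨max B 0 + 1, fun a ha => ?_⟩
  have hne : ∀ x, (Q + C a).eval x ≠ 0 := by
    intro x
    have hb := le_max_left B 0
    have hb0 := le_max_right B 0
    suffices 0 < (Q + C a).eval x from this.ne'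
    simp only [eval_add, eval_C]
    rcases lt_or_ge x (-M2) with h | h
    · have := hM2 (-x) (by linarith)
      simp only [eval_comp, eval_neg, eval_X, neg_neg] at this
      linarith
    rcases lt_or_ge M1 x with h' | h'
    · have := hM1 x h'.le
      linarith
    · have := hB x ⟨h, h'⟩
      rw [Real.norm_eq_abs, abs_le] at this
      linarith
  refine ⟨?_, ?_, fun x hx => absurd hx (hne x)⟩
  · simp [hne, -eval_add]
  · simp [hne, -eval_add]

lemma base_odd (Q : ℝ[X]) (ho : Odd Q.natDegree) (hpos : 1 < Q.natDegree)
    (hl : 0 < Q.leadingCoeff) : ∃ A : ℝ, ∀ a, A ≤ a →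
      CountRoots (Q + C a) 0 1 ∧ CountRoots (Q + C (-a)) 1 0 := by
  have hdeg : 0 < Q.degree := natDegree_pos_iff_degree_pos.1 (by omega)
  have hdn : Q.derivative.natDegree = Q.natDegree - 1 := natDegree_derivative _
  have hdl : Q.derivative.leadingCoeff = Q.leadingCoeff * Q.natDegree := by
    rw [leadingCoeff, hdn, coeff_derivative, Nat.sub_add_cancel (by omega), leadingCoeff]
    congr 1
    have : Q.natDegree = (Q.natDegree - 1) + 1 := by omega
    exact_mod_cast this.symm
  have hdl0 : 0 < Q.derivative.leadingCoeff := by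
    rw [hdl]
    have : (0:ℝ) < Q.natDegree := by exact_mod_cast (by omega : 0 < Q.natDegree)
    positivity
  have hde : Even Q.derivative.natDegree := by
    rw [hdn]; exact Nat.Odd.sub_odd ho odd_one
  have h1 := Q.tendsto_atTop_of_leadingCoeff_nonneg hdeg hl.le
  have h2 := (-(Q.comp (-X))).tendsto_atTop_of_leadingCoeff_nonneg (by
      rw [degree_neg, ← natDegree_pos_iff_degree_pos, natDegree_comp]; simp; omega) (by
      rw [leadingCoeff_neg, leadingCoeff_comp (by simp)]; simp [ho.neg_one_pow, hl.le])
  have h3 := Q.derivative.tendsto_atTop_of_leadingCoeff_nonneg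
    (natDegree_pos_iff_degree_pos.1 (by omega)) hdl0.le
  have h4 := (Q.derivative.comp (-X)).tendsto_atTop_of_leadingCoeff_nonneg (by
      rw [← natDegree_pos_iff_degree_pos, natDegree_comp]; simp; omega) (by
      rw [leadingCoeff_comp (by simp), leadingCoeff_neg, leadingCoeff_X, hde.neg_one_pow, mul_one]
      exact hdl0.le)
  have hbot : Filter.Tendsto (fun x => Q.eval x) Filter.atBot Filter.atBot := by
    have := Filter.tendsto_neg_atTop_atBot.comp (h2.comp Filter.tendsto_neg_atBot_atTop)
    refine this.congr fun x => ?_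
    simp
  have hsurj : Function.Surjective (fun x => Q.eval x) := Q.continuous.surjective h1 hbot
  obtain ⟨M1, hM1⟩ := Filter.eventually_atTop.1 (h3.eventually (Filter.eventually_gt_atTop 0))
  obtain ⟨M2, hM2⟩ := Filter.eventually_atTop.1 (h4.eventually (Filter.eventually_gt_atTop 0))
  set M := max (max M1 M2) 1 with hM
  have hM0 : 0 < M := lt_of_lt_of_le one_pos (le_max_right _ _)
  have hMM1 : M1 ≤ M := (le_max_left _ _).trans (le_max_left _ _)
  have hMM2 : M2 ≤ M := (le_max_right _ _).trans (le_max_left _ _)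
  have hd1 : ∀ x, M ≤ x → 0 < Q.derivative.eval x := fun x hx => hM1 x (hMM1.trans hx)
  have hd2 : ∀ x, x ≤ -M → 0 < Q.derivative.eval x := fun x hx => by
    have := hM2 (-x) (by linarith)
    simpa using this
  have hm1 : StrictMonoOn (fun x => Q.eval x) (Set.Ici M) := by
    refine strictMonoOn_of_deriv_pos (convex_Ici M) Q.continuous.continuousOn fun x hx => ?_
    rw [interior_Ici] at hx
    rw [Polynomial.deriv]
    exact hd1 x (le_of_lt hx)
  have hm2 : StrictMonoOn (fun x => Q.eval x) (Set.Iic (-M)) := by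
    refine strictMonoOn_of_deriv_pos (convex_Iic (-M)) Q.continuous.continuousOn fun x hx => ?_
    rw [interior_Iic] at hx
    rw [Polynomial.deriv]
    exact hd2 x (le_of_lt hx)
  obtain ⟨B, hB⟩ := (isCompact_Icc (a := -M) (b := M)).exists_bound_of_continuousOn
    (f := fun x => Q.eval x) Q.continuous.continuousOn
  have hB' : ∀ x, -M ≤ x → x ≤ M → -B ≤ Q.eval x ∧ Q.eval x ≤ B := by
    intro x h h'
    have := hB x ⟨h, h'⟩
    rwa [Real.norm_eq_abs, abs_le] at this
  refine ⟨B + 1, fun a ha => ⟨?_, ?_⟩⟩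
  · have hroot : ∀ x, (Q + C a).eval x = 0 → x < -M := by
      intro x hx
      simp only [eval_add, eval_C] at hx
      by_contra hcon
      rcases le_or_gt x M with h | h
      · have := hB' x (not_lt.1 hcon) h
        linarith
      · have h5 : Q.eval M < Q.eval x := hm1 (Set.self_mem_Ici) h.le h
        have := hB' M (by linarith) le_rfl
        linarith
    obtain ⟨x0, hx0⟩ := hsurj (-a)
    have hx0' : (Q + C a).eval x0 = 0 := by
      simp only [eval_add, eval_C]; simp only at hx0; linarith
    refine ⟨?_, ?_, ?_⟩
    · convert Set.ncard_empty ℝ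
      rw [Set.eq_empty_iff_forall_notMem]
      rintro x ⟨h, h'⟩
      have := hroot x h'
      linarith
    · rw [Set.ncard_eq_one]
      refine ⟨x0, Set.eq_singleton_iff_unique_mem.2 ⟨⟨?_, hx0'⟩, ?_⟩⟩
      · have := hroot x0 hx0'; linarith
      · rintro x ⟨_, hx⟩
        refine hm2.injOn (hroot x hx).le (hroot x0 hx0').le ?_
        simp only [eval_add, eval_C] at hx hx0'
        show Q.eval x = Q.eval x0
        linarith
    · intro x hx
      simpa using (hd2 x (hroot x hx).le).ne'
  · have hroot : ∀ x, (Q + C (-a)).eval x = 0 → M < x := by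
      intro x hx
      simp only [eval_add, eval_C] at hx
      by_contra hcon
      rcases le_or_gt (-M) x with h | h
      · have := hB' x h (not_lt.1 hcon)
        linarith
      · have h5 : Q.eval x < Q.eval (-M) := hm2 h.le (Set.self_mem_Iic) h
        have := hB' (-M) le_rfl (by linarith)
        linarith
    obtain ⟨x0, hx0⟩ := hsurj a
    have hx0' : (Q + C (-a)).eval x0 = 0 := by
      simp only [eval_add, eval_C]; simp only at hx0; linarith
    refine ⟨?_, ?_, ?_⟩
    · rw [Set.ncard_eq_one]
      refine ⟨x0, Set.eq_singleton_iff_unique_mem.2 ⟨⟨?_, hx0'⟩, ?_⟩⟩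
      · have := hroot x0 hx0'; linarith
      · rintro x ⟨_, hx⟩
        refine hm1.injOn (hroot x hx).le (hroot x0 hx0').le ?_
        simp only [eval_add, eval_C] at hx hx0'
        show Q.eval x = Q.eval x0
        linarith
    · convert Set.ncard_empty ℝ
      rw [Set.eq_empty_iff_forall_notMem]
      rintro x ⟨h, h'⟩
      have := hroot x h'
      linarith
    · intro x hx
      simpa using (hd1 x (hroot x hx).le).ne'

lemma count_smul (P : ℝ[X]) (c : ℝ) (hc : c ≠ 0) (a b : ℕ) (h : CountRoots P a b) :
    CountRoots (C c * P) a b := by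
  simpa [CountRoots, hc] using h

lemma Cn_sign (t : ℕ → ℝ) (n : ℕ) (ht : ∀ j ≤ n, t j ≠ 0) :
    Cn t 0 n + Pn t 0 n = n ∧ (Even (Cn t 0 n) → 0 < t 0 * t n) ∧
      (Odd (Cn t 0 n) → t 0 * t n < 0) := by
  induction n with
  | zero => simpa [Cn, Pn] using ht 0 le_rfl
  | succ n ih =>
    obtain ⟨h1, h2, h3⟩ := ih fun j hj => ht j (by omega)
    have hn := ht n (by omega)
    have hn1 := ht (n+1) le_rfl
    rw [Cn_succ t 0 n (by omega), Pn_succ t 0 n (by omega)]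
    have e : t 0 * t (n+1) = (t 0 * t n) * (t n * t (n+1)) * ((t n)⁻¹)^2 := by field_simp
    have hi : 0 < ((t n)⁻¹)^2 := by have := inv_ne_zero hn; positivity
    rcases lt_or_gt_of_ne (mul_ne_zero hn hn1) with h | h
    · rw [if_pos h, if_neg h.not_gt]
      refine ⟨by omega, fun hh => ?_, fun hh => ?_⟩
      · have : Odd (Cn t 0 n) := by
          by_contra hc; rw [Nat.not_odd_iff_even] at hc
          exact (Nat.not_even_iff_odd.2 hc.add_one) hh
        rw [e]; exact mul_pos (mul_pos_of_neg_of_neg (h3 this) h) hi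
      · have : Even (Cn t 0 n) := by
          by_contra hc; rw [Nat.not_even_iff_odd] at hc
          exact (Nat.not_odd_iff_even.2 hc.add_one) hh
        rw [e]; exact mul_neg_of_neg_of_pos (mul_neg_of_pos_of_neg (h2 this) h) hi
    · rw [if_neg h.not_gt, if_pos h]
      refine ⟨by omega, fun hh => ?_, fun hh => ?_⟩
      · rw [e]; exact mul_pos (mul_pos (h2 hh) h) hi
      · rw [e]; exact mul_neg_of_neg_of_pos (mul_neg_of_neg_of_pos (h3 hh) h) hi

/-- choose a huge constant term; leading coefficient of any sign. -/
lemma base_gen (Q : ℝ[X]) (x y : ℕ) (hxy : x ≤ 1 ∧ y ≤ 1 ∧ ¬ (x = 1 ∧ y = 1))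
    (hpar : Q.natDegree % 2 = (x + y) % 2) (hpos : 1 < Q.natDegree) (η : ℝ)
    (hη : if x = 1 then η * Q.leadingCoeff < 0 else 0 < η * Q.leadingCoeff) :
    ∃ a, 0 < η * a ∧ CountRoots (Q + C a) x y := by
  wlog hl : 0 < Q.leadingCoeff generalizing Q η
  · have hl0 : Q.leadingCoeff ≠ 0 := by
      intro h; simp [h] at hη
    obtain ⟨a, ha, hc⟩ := this (-Q) (by simpa using hpar) (by simpa using hpos) (-η)
      (by simpa using hη) (by
        rw [leadingCoeff_neg]
        have := lt_of_le_of_ne (not_lt.1 hl) hl0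
        linarith)
    refine ⟨-a, by linarith, ?_⟩
    have := count_smul _ (-1) (by norm_num) _ _ hc
    convert this using 1
    simp
    ring
  · rcases Nat.even_or_odd Q.natDegree with he | ho
    · obtain ⟨A, hA⟩ := base_even Q he (by omega) hl
      have h2 := Nat.even_iff.1 he
      obtain ⟨rfl, rfl⟩ : x = 0 ∧ y = 0 := by omega
      simp only [zero_ne_one, if_false] at hη
      have hη0 : 0 < η := pos_of_mul_pos_left hη hl.le
      refine ⟨max A 1, ?_, hA _ (le_max_left _ _)⟩
      have := lt_of_lt_of_le one_pos (le_max_right A 1)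
      positivity
    · obtain ⟨A, hA⟩ := base_odd Q ho hpos hl
      have h2 := Nat.odd_iff.1 ho
      have hA1 : 0 < max A 1 := lt_of_lt_of_le one_pos (le_max_right A 1)
      obtain ⟨rfl, rfl⟩ | ⟨rfl, rfl⟩ : (x = 0 ∧ y = 1) ∨ (x = 1 ∧ y = 0) := by omega
      · simp only [zero_ne_one, if_false] at hη
        have hη0 : 0 < η := pos_of_mul_pos_left hη hl.le
        exact ⟨max A 1, by positivity, (hA _ (le_max_left _ _)).1⟩
      · simp only [if_true] at hη
        have hη0 : η < 0 := by
          by_contra hc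
          have := mul_nonneg (not_lt.1 hc) hl.le
          linarith
        exact ⟨-max A 1, mul_pos_of_neg_of_neg hη0 (by linarith), (hA _ (le_max_left _ _)).2⟩

lemma HH_base (t : ℕ → ℝ) (e u v x y : ℕ) (ht : ∀ j ≤ e, t j ≠ 0) (he : 1 < e)
    (hxy : x ≤ 1 ∧ y ≤ 1 ∧ ¬ (x = 1 ∧ y = 1)) (hu : Even u) (hv : Even v)
    (hx : x + u = Cn t 0 e) (hy : y + v = Pn t 0 e) : HH t e u v := by
  obtain ⟨R, hdeg, hsign, hcount⟩ := HH_hyp t e ht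
  obtain ⟨s1, s2, s3⟩ := Cn_sign t e ht
  have hu' := Nat.even_iff.1 hu
  have hv' := Nat.even_iff.1 hv
  have hle := hsign e le_rfl
  have hq : t 0 * R.leadingCoeff = (t 0 * t e) * (t e * R.coeff e) * ((t e)⁻¹)^2 := by
    have := ht e le_rfl
    rw [leadingCoeff, hdeg]; field_simp
  have hi : 0 < ((t e)⁻¹)^2 := by have := inv_ne_zero (ht e le_rfl); positivity
  have hη : if x = 1 then t 0 * R.leadingCoeff < 0 else 0 < t 0 * R.leadingCoeff := by
    split_ifs with h
    · have := s3 (Nat.odd_iff.2 (by omega))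
      rw [hq]; exact mul_neg_of_neg_of_pos (mul_neg_of_neg_of_pos this hle) hi
    · have := s2 (Nat.even_iff.2 (by omega))
      rw [hq]; exact mul_pos (mul_pos this hle) hi
  obtain ⟨a, ha, hc⟩ := base_gen (R - C (R.coeff 0)) x y hxy
    (by rw [natDegree_sub_C, hdeg]; omega) (by rw [natDegree_sub_C, hdeg]; omega) (t 0) (by
      have : (R - C (R.coeff 0)).leadingCoeff = R.leadingCoeff := by
        rw [leadingCoeff, natDegree_sub_C, coeff_sub, coeff_C, if_neg (by omega), sub_zero,
          leadingCoeff]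
      rw [this]; exact hη)
  set R' := R - C (R.coeff 0) + C a with hR'
  have hder : derivative R' = derivative R := by simp [hR']
  refine ⟨R', by rw [hR', natDegree_add_C, natDegree_sub_C, hdeg], ?_, ?_⟩
  · intro j hj
    by_cases h : j = 0
    · subst h; simpa [hR'] using ha
    · have : R'.coeff j = R.coeff j := by simp [hR', coeff_C, h]
      rw [this]; exact hsign j hj
  · intro k hk
    cases k with
    | zero => exact ⟨x, y, hc, by simpa using hx, by simpa using hy⟩
    | succ k =>
      obtain ⟨x', y', h1, h2, h3⟩ := hcount (k+1) hk
      refine ⟨x', y', ?_, by simpa using h2, by simpa using h3⟩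
      rw [Function.iterate_succ_apply, hder, ← Function.iterate_succ_apply]
      exact h1

lemma t_ne (d : ℕ) (s : ℕ → ℤ) (hs : IsSignPattern d s) : ∀ j ≤ d, ((s (d - j) : ℤ) : ℝ) ≠ 0 := by
  intro j _
  rcases hs.2 (d - j) (by omega) with h | h <;> rw [h] <;> norm_num

lemma sc_eq (d : ℕ) (s : ℕ → ℤ) (k : ℕ) (hk : k ≤ d) :
    signChanges s (d - k) = Cn (fun j => (s (d - j) : ℝ)) k d := by
  unfold signChanges Cn
  refine Finset.card_nbij' (fun i => d - 1 - i) (fun j => d - 1 - j) ?_ ?_ ?_ ?_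
  · intro i hi
    simp only [Finset.coe_filter, Finset.mem_range, Finset.mem_Ico, Set.mem_ofPred_eq] at hi ⊢
    refine ⟨by omega, ?_⟩
    rw [show d - (d - 1 - i) = i + 1 by omega, show d - (d - 1 - i + 1) = i by omega, mul_comm]
    exact_mod_cast hi.2
  · intro i hi
    simp only [Finset.coe_filter, Finset.mem_range, Finset.mem_Ico, Set.mem_ofPred_eq] at hi ⊢
    refine ⟨by omega, ?_⟩
    have h2 := hi.2
    rw [show d - 1 - i + 1 = d - i by omega, show d - 1 - i = d - (i + 1) by omega, mul_comm]
    exact_mod_cast h2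
  · intro i hi
    simp only [Finset.coe_filter, Finset.mem_range, Set.mem_ofPred_eq] at hi
    simp only
    omega
  · intro i hi
    simp only [Finset.coe_filter, Finset.mem_Ico, Set.mem_ofPred_eq] at hi
    simp only
    omega

lemma sp_eq (d : ℕ) (s : ℕ → ℤ) (k : ℕ) (hk : k ≤ d) :
    signPres s (d - k) = Pn (fun j => (s (d - j) : ℝ)) k d := by
  unfold signPres Pn
  refine Finset.card_nbij' (fun i => d - 1 - i) (fun j => d - 1 - j) ?_ ?_ ?_ ?_
  · intro i hi
    simp only [Finset.coe_filter, Finset.mem_range, Finset.mem_Ico, Set.mem_ofPred_eq] at hi ⊢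
    refine ⟨by omega, ?_⟩
    rw [show d - (d - 1 - i) = i + 1 by omega, show d - (d - 1 - i + 1) = i by omega, mul_comm]
    exact_mod_cast hi.2
  · intro i hi
    simp only [Finset.coe_filter, Finset.mem_range, Finset.mem_Ico, Set.mem_ofPred_eq] at hi ⊢
    refine ⟨by omega, ?_⟩
    have h2 := hi.2
    rw [show d - 1 - i + 1 = d - i by omega, show d - 1 - i = d - (i + 1) by omega, mul_comm]
    exact_mod_cast h2
  · intro i hi
    simp only [Finset.coe_filter, Finset.mem_range, Set.mem_ofPred_eq] at hi
    simp only
    omega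
  · intro i hi
    simp only [Finset.coe_filter, Finset.mem_Ico, Set.mem_ofPred_eq] at hi
    simp only
    omega

lemma sc_sp_le (s : ℕ → ℤ) (m : ℕ) : signChanges s m + signPres s m ≤ m := by
  unfold signChanges signPres
  rw [← Finset.card_union_of_disjoint]
  · refine (Finset.card_le_card (Finset.union_subset (Finset.filter_subset _ _)
      (Finset.filter_subset _ _))).trans (by simp)
  · rw [Finset.disjoint_filter]
    intro i _ h
    exact h.not_gt

lemma pn_eq (d : ℕ) (s : ℕ → ℤ) (pn : ℕ → ℕ × ℕ) (hpn : IsSAP d s pn)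
    (hsum : (pn 0).1 + (pn 0).2 = d) : ∀ k < d,
    (pn k).1 = Cn (fun j => (s (d - j) : ℝ)) k d ∧ (pn k).2 = Pn (fun j => (s (d - j) : ℝ)) k d := by
  have h1 : ∀ k < d, d ≤ (pn k).1 + (pn k).2 + k := by
    intro k
    induction k with
    | zero => intro _; omega
    | succ k ih =>
      intro hk
      have := ih (by omega)
      have := (hpn.2 k hk).2.2.1
      omega
  intro k hk
  rw [← sc_eq d s k hk.le, ← sp_eq d s k hk.le]
  have := h1 k hk
  have := sc_sp_le s (d - k)
  have h3 := hpn.1 k hk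
  have := h3.1
  have := h3.2.2.1
  omega

lemma exists_Cn (t : ℕ → ℝ) (m d : ℕ) (h : m ≤ Cn t 0 d) : ∃ e ≤ d, Cn t 0 e = m := by
  induction d with
  | zero => exact ⟨0, le_rfl, by simp [Cn] at h ⊢; omega⟩
  | succ d ih =>
    by_cases h' : m ≤ Cn t 0 d
    · obtain ⟨e, he, h2⟩ := ih h'
      exact ⟨e, by omega, h2⟩
    · refine ⟨d + 1, le_rfl, ?_⟩
      rw [Cn_succ t 0 d (by omega)] at h ⊢
      split_ifs at h ⊢ <;> omega

lemma exists_Pn (t : ℕ → ℝ) (m d : ℕ) (h : m ≤ Pn t 0 d) : ∃ e ≤ d, Pn t 0 e = m := by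
  induction d with
  | zero => exact ⟨0, le_rfl, by simp [Pn] at h ⊢; omega⟩
  | succ d ih =>
    by_cases h' : m ≤ Pn t 0 d
    · obtain ⟨e, he, h2⟩ := ih h'
      exact ⟨e, by omega, h2⟩
    · refine ⟨d + 1, le_rfl, ?_⟩
      rw [Pn_succ t 0 d (by omega)] at h ⊢
      split_ifs at h ⊢ <;> omega

lemma Cn_mono (t : ℕ → ℝ) (e d : ℕ) (h : e ≤ d) : Cn t 0 e ≤ Cn t 0 d :=
  Finset.card_le_card (Finset.filter_subset_filter _ (Finset.Ico_subset_Ico le_rfl h))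

lemma Pn_mono (t : ℕ → ℝ) (e d : ℕ) (h : e ≤ d) : Pn t 0 e ≤ Pn t 0 d :=
  Finset.card_le_card (Finset.filter_subset_filter _ (Finset.Ico_subset_Ico le_rfl h))

lemma iterDeriv_eq (k : ℕ) (P : ℝ[X]) : iterDeriv k P = derivative^[k] P := by
  induction k with
  | zero => rfl
  | succ k ih => rw [Function.iterate_succ_apply', ← ih]; rfl

lemma HH_real (d : ℕ) (s : ℕ → ℤ) (hs : IsSignPattern d s) (u v : ℕ)
    (h : HH (fun j => (s (d - j) : ℝ)) d u v) (pn : ℕ → ℕ × ℕ)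
    (hpn : ∀ k < d,
      (pn k).1 + (if k = 0 then u else 0) = Cn (fun j => (s (d - j) : ℝ)) k d ∧
      (pn k).2 + (if k = 0 then v else 0) = Pn (fun j => (s (d - j) : ℝ)) k d) :
    Realizable d s pn := by
  obtain ⟨R, hdeg, hsign, hcount⟩ := h
  have hl : 0 < R.leadingCoeff := by
    have := hsign d le_rfl
    simp only [Nat.sub_self, hs.1, Int.cast_one, one_mul] at this
    rwa [leadingCoeff, hdeg]
  have hi : 0 < R.leadingCoeff⁻¹ := inv_pos.2 hl
  have hsg : ∀ j ≤ d, 0 < (s (d - j) : ℝ) * (C R.leadingCoeff⁻¹ * R).coeff j := by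
    intro j hj
    rw [coeff_C_mul, mul_left_comm]
    exact mul_pos hi (hsign j hj)
  refine ⟨C R.leadingCoeff⁻¹ * R, ?_, ?_, ?_, ?_, ?_⟩
  · rw [Monic, leadingCoeff_mul, leadingCoeff_C, inv_mul_cancel₀ hl.ne']
  · rw [natDegree_C_mul hi.ne', hdeg]
  · intro j hj h0
    have := hsg j hj
    rw [h0] at this; simp at this
  · intro i hi
    have := hsg (d - i) (by omega)
    rwa [show d - (d - i) = i by omega] at this
  · intro k hk
    obtain ⟨x, y, h1, h2, h3⟩ := hcount k hk.le
    obtain ⟨h4, h5⟩ := hpn k hk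
    rw [iterDeriv_eq, iterate_derivative_C_mul]
    have e1 : x = (pn k).1 := by omega
    have e2 : y = (pn k).2 := by omega
    rw [← e1, ← e2]
    exact count_smul _ _ hi.ne' _ _ h1

/-- If the Descartes pair of `σ` is `(d-1, 1)` (resp. `(1, d-1)`) and `pn` is the
unique SAP for `σ` with `pos_0 + neg_0 = d`, then for every `ν` with `1 ≤ ν` and
`2ν ≤ d-1`, every SAP for `σ` obtained from `pn` by replacing its first pair with
`(d-1-2ν, 1)` (resp. `(1, d-1-2ν)`) is realizable with the sign pattern `σ`. -/
theorem stmt12 (d : ℕ) (hd : 1 ≤ d) (s : ℕ → ℤ) (hs : IsSignPattern d s)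
    (pn : ℕ → ℕ × ℕ) (hpn : IsSAP d s pn) (hsum : (pn 0).1 + (pn 0).2 = d) :
    ((signChanges s d = d - 1 ∧ signPres s d = 1) →
      ∀ ν : ℕ, 1 ≤ ν → 2 * ν ≤ d - 1 →
        ∀ pn' : ℕ → ℕ × ℕ, pn' 0 = (d - 1 - 2 * ν, 1) →
          (∀ k, 1 ≤ k → k < d → pn' k = pn k) →
          IsSAP d s pn' → Realizable d s pn') ∧
    ((signChanges s d = 1 ∧ signPres s d = d - 1) →
      ∀ ν : ℕ, 1 ≤ ν → 2 * ν ≤ d - 1 →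
        ∀ pn' : ℕ → ℕ × ℕ, pn' 0 = (1, d - 1 - 2 * ν) →
          (∀ k, 1 ≤ k → k < d → pn' k = pn k) →
          IsSAP d s pn' → Realizable d s pn') := by
  refine ⟨?_, ?_⟩
  · rintro ⟨hc, hp⟩ ν hν hν2 pn' h0 hk hsap
    have hcp := pn_eq d s pn hpn hsum
    set t : ℕ → ℝ := fun j => (s (d - j) : ℝ) with ht
    have htne : ∀ j ≤ d, t j ≠ 0 := t_ne d s hs
    have hC := sc_eq d s 0 (by omega)
    have hP := sp_eq d s 0 (by omega)
    rw [Nat.sub_zero] at hC hP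
    rw [hc] at hC
    rw [hp] at hP
    change _ = Cn t 0 d at hC
    change _ = Pn t 0 d at hP
    obtain ⟨e, hed, he⟩ := exists_Cn t (2 * ν) d (by rw [← hC]; omega)
    have hmono : Pn t 0 e ≤ Pn t 0 d := Pn_mono t e d hed
    have hsum' := (Cn_sign t e fun j hj => htne j (by omega)).1
    have hb : HH t e (2 * ν) 0 := HH_base t e (2 * ν) 0 0 (Pn t 0 e)
      (fun j hj => htne j (by omega)) (by omega) (by omega) (by simp) (by simp)
      (by omega) (by omega)
    refine HH_real d s hs (2 * ν) 0 (HH_up t e d _ _ hed htne hb) pn' fun k hkd => ?_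
    by_cases hk0 : k = 0
    · subst hk0
      rw [h0]
      simp only [if_true]
      change _ = Cn t 0 d ∧ _ = Pn t 0 d
      omega
    · rw [hk k (by omega) hkd]
      simpa [hk0] using hcp k hkd
  · rintro ⟨hc, hp⟩ ν hν hν2 pn' h0 hk hsap
    have hcp := pn_eq d s pn hpn hsum
    set t : ℕ → ℝ := fun j => (s (d - j) : ℝ) with ht
    have htne : ∀ j ≤ d, t j ≠ 0 := t_ne d s hs
    have hC := sc_eq d s 0 (by omega)
    have hP := sp_eq d s 0 (by omega)
    rw [Nat.sub_zero] at hC hP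
    rw [hc] at hC
    rw [hp] at hP
    change _ = Cn t 0 d at hC
    change _ = Pn t 0 d at hP
    obtain ⟨e, hed, he⟩ := exists_Pn t (2 * ν) d (by rw [← hP]; omega)
    have hmono : Cn t 0 e ≤ Cn t 0 d := Cn_mono t e d hed
    have hsum' := (Cn_sign t e fun j hj => htne j (by omega)).1
    have hb : HH t e 0 (2 * ν) := HH_base t e 0 (2 * ν) (Cn t 0 e) 0
      (fun j hj => htne j (by omega)) (by omega) (by omega) (by simp) (by simp)
      (by omega) (by omega)
    refine HH_real d s hs 0 (2 * ν) (HH_up t e d _ _ hed htne hb) pn' fun k hkd => ?_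
    by_cases hk0 : k = 0
    · subst hk0
      rw [h0]
      simp only [if_true]
      change _ = Cn t 0 d ∧ _ = Pn t 0 d
      omega
    · rw [hk k (by omega) hkd]
      simpa [hk0] using hcp k hkd
end
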